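/- Let n be a positive integer. Then 2·δ(n) ≤ n if and only if n ∉ {1, 8, 9, 12, 15} and n is not of the form p or 2p for any prime p. Moreover, 2·δ(n) = n if and only if n ∈ {16, 18}. -/

import Mathlib

/-- `staircaseDelta n` is the minimum of `r + s` over all pairs of positive
integers `(r, s)` with `r ≤ s` and `r * s = n`. -/
noncomputable def staircaseDelta (n : ℕ) : ℕ :=
  sInf {w : ℕ | ∃ r s : ℕ, 0 < r ∧ r ≤ s ∧ r * s = n ∧ w = r + s}

/-!
A factorization `n = r * s` satisfies `2 * (r + s) ≤ r * s` only if `r, s ≥ 3`, and then the AM-GM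
inequality `4 * r * s ≤ (r + s) ^ 2` forces `16 ≤ n`. Conversely these two conditions suffice, so
`2 * δ(n) ≤ n` means that `16 ≤ n` and that `n` is a product of two factors at least `3`. Apart
from `1` and `8`, the positive integers that are not such a product are the primes and the doubles
of primes; those below `16` that are such a product are `9`, `12` and `15`. If equality holds with
`r ≤ s`, then `r * s ≤ 4 * s`, so `r` is `3` or `4`.
-/

section Factorizations

theorem lt_of_mul_add_le_mul {R : Type*} [Semiring R] [LinearOrder R] [IsStrictOrderedRing R]
    {m r s : R} (hr : 0 < r) (hs : 0 ≤ s) (h : m * (r + s) ≤ r * s) : m < r := by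
  by_contra! hrm
  have hlt : r * s < m * (r + s) :=
    calc r * s ≤ m * s := mul_le_mul_of_nonneg_right hrm hs
      _ < m * (r + s) := mul_lt_mul_of_pos_left (lt_add_of_pos_left s hr) (hr.trans_le hrm)
  exact hlt.not_ge h

theorem mul_ne_mul_prime {m p r s : ℕ} (hp : p.Prime) (hr : m < r) (hs : m < s) :
    r * s ≠ m * p := by
  intro h
  wlog hpr : p ∣ r generalizing r s
  · have hps : p ∣ s := (hp.dvd_mul.mp (Dvd.intro_left m h.symm)).resolve_left hpr
    exact this hs hr (by rw [mul_comm, h]) hps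
  obtain ⟨k, rfl⟩ := hpr
  have hks : k * s = m := Nat.eq_of_mul_eq_mul_left hp.pos (by linarith)
  have hk : 0 < k := Nat.pos_of_mul_pos_left (m.zero_le.trans_lt hr)
  exact hs.not_ge (hks ▸ Nat.le_mul_of_pos_left s hk)

theorem exists_two_le_le_mul_eq_of_not_prime {n : ℕ} (hn : 1 < n) (hp : ¬ n.Prime) :
    ∃ a b : ℕ, 2 ≤ a ∧ a ≤ b ∧ a * b = n :=
  ⟨n.minFac, n / n.minFac, (Nat.minFac_prime hn.ne').two_le,
    Nat.minFac_le_div (by lia) hp, Nat.mul_div_cancel' n.minFac_dvd⟩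

theorem exists_three_le_mul_eq {n : ℕ} (hn : 1 < n) (h8 : n ≠ 8) (hp : ¬ n.Prime)
    (h2p : ∀ p : ℕ, p.Prime → n ≠ 2 * p) : ∃ r s : ℕ, 3 ≤ r ∧ 3 ≤ s ∧ r * s = n := by
  obtain ⟨a, b, ha, hab, rfl⟩ := exists_two_le_le_mul_eq_of_not_prime hn hp
  obtain rfl | ha3 := ha.eq_or_lt
  · have hb : ¬ b.Prime := fun hb => h2p b hb rfl
    obtain ⟨c, d, hc, hcd, rfl⟩ := exists_two_le_le_mul_eq_of_not_prime hab hb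
    have hd : d ≠ 2 := by
      rintro rfl
      exact h8 (by rw [le_antisymm hcd hc])
    exact ⟨2 * c, d, by lia, by lia, mul_assoc 2 c d⟩
  · exact ⟨a, b, ha3, ha3.trans_le hab, rfl⟩

theorem sixteen_le_mul {r s : ℕ} (hr : 3 ≤ r) (hs : 3 ≤ s) (h9 : r * s ≠ 9)
    (h12 : r * s ≠ 12) (h15 : r * s ≠ 15) : 16 ≤ r * s := by
  by_contra! hlt
  have hr5 : r ≤ 5 := by nlinarith
  have hs5 : s ≤ 5 := by nlinarith
  interval_cases r <;> interval_cases s <;> lia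

theorem two_mul_add_le_mul {r s : ℕ} (hr : 3 ≤ r) (hs : 3 ≤ s) (h : 16 ≤ r * s) :
    2 * (r + s) ≤ r * s := by
  wlog hrs : r ≤ s generalizing r s
  · simpa only [add_comm, mul_comm] using this hs hr (by rwa [mul_comm]) (le_of_not_ge hrs)
  obtain rfl | hr4 := hr.eq_or_lt
  · lia
  · calc 2 * (r + s) ≤ 4 * s := by lia
      _ ≤ r * s := Nat.mul_le_mul_right s hr4

theorem mul_eq_sixteen_or_eighteen {r s : ℕ} (hr : 0 < r) (hrs : r ≤ s)
    (h : 2 * (r + s) = r * s) : r * s = 16 ∨ r * s = 18 := by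
  have hr3 : 2 < r := lt_of_mul_add_le_mul hr s.zero_le h.le
  have hr4 : r ≤ 4 := Nat.le_of_mul_le_mul_right (by lia : r * s ≤ 4 * s) (hr.trans_le hrs)
  interval_cases r <;> lia

end Factorizations

section StaircaseDelta

theorem staircaseDelta_mul_le {r s : ℕ} (hr : 0 < r) (hs : 0 < s) :
    staircaseDelta (r * s) ≤ r + s := by
  wlog hrs : r ≤ s generalizing r s
  · simpa only [add_comm, mul_comm] using this hs hr (le_of_not_ge hrs)
  exact Nat.sInf_le ⟨r, s, hr, hrs, rfl, rfl⟩

variable {n : ℕ}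

theorem exists_mul_eq_and_staircaseDelta_eq_add (hn : 0 < n) :
    ∃ r s : ℕ, 0 < r ∧ r ≤ s ∧ r * s = n ∧ staircaseDelta n = r + s :=
  Nat.sInf_mem (s := {w | ∃ r s : ℕ, 0 < r ∧ r ≤ s ∧ r * s = n ∧ w = r + s})
    ⟨1 + n, 1, n, one_pos, hn, one_mul n, rfl⟩

theorem four_mul_le_staircaseDelta_sq (n : ℕ) : 4 * n ≤ staircaseDelta n ^ 2 := by
  obtain rfl | hn := n.eq_zero_or_pos
  · exact Nat.zero_le _
  obtain ⟨r, s, -, -, rfl, hδ⟩ := exists_mul_eq_and_staircaseDelta_eq_add hn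
  rw [hδ, ← mul_assoc]
  exact four_mul_le_sq_add r s

theorem sixteen_le_of_two_mul_staircaseDelta_le (hn : 0 < n) (h : 2 * staircaseDelta n ≤ n) :
    16 ≤ n := by
  refine Nat.le_of_mul_le_mul_right ?_ hn
  calc 16 * n = 4 * (4 * n) := by ring
    _ ≤ 4 * staircaseDelta n ^ 2 := Nat.mul_le_mul_left 4 (four_mul_le_staircaseDelta_sq n)
    _ = (2 * staircaseDelta n) ^ 2 := by ring
    _ ≤ n ^ 2 := Nat.pow_le_pow_left h 2
    _ = n * n := sq n

theorem two_mul_staircaseDelta_le_iff (hn : 0 < n) :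
    2 * staircaseDelta n ≤ n ↔ 16 ≤ n ∧ ∃ r s : ℕ, 3 ≤ r ∧ 3 ≤ s ∧ r * s = n := by
  constructor
  · intro h
    refine ⟨sixteen_le_of_two_mul_staircaseDelta_le hn h, ?_⟩
    obtain ⟨r, s, hr, hrs, rfl, hδ⟩ := exists_mul_eq_and_staircaseDelta_eq_add hn
    have hr3 : 2 < r := lt_of_mul_add_le_mul hr s.zero_le (hδ ▸ h)
    exact ⟨r, s, hr3, hr3.trans_le hrs, rfl⟩
  · rintro ⟨h16, r, s, hr, hs, rfl⟩
    calc 2 * staircaseDelta (r * s) ≤ 2 * (r + s) :=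
          Nat.mul_le_mul_left 2 (staircaseDelta_mul_le (by lia) (by lia))
      _ ≤ r * s := two_mul_add_le_mul hr hs h16

theorem two_mul_staircaseDelta_eq_iff (hn : 0 < n) :
    2 * staircaseDelta n = n ↔ n = 16 ∨ n = 18 := by
  constructor
  · intro h
    obtain ⟨r, s, hr, hrs, rfl, hδ⟩ := exists_mul_eq_and_staircaseDelta_eq_add hn
    exact mul_eq_sixteen_or_eighteen hr hrs (hδ ▸ h)
  · intro h
    have hsq : 4 * n ≤ staircaseDelta n ^ 2 := four_mul_le_staircaseDelta_sq n
    rcases h with rfl | rfl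
    · have hle : staircaseDelta 16 ≤ 8 := staircaseDelta_mul_le (r := 4) (s := 4) (by lia) (by lia)
      have hge : 7 < staircaseDelta 16 := lt_of_pow_lt_pow_left₀ 2 (Nat.zero_le _) (by lia)
      lia
    · have hle : staircaseDelta 18 ≤ 9 := staircaseDelta_mul_le (r := 3) (s := 6) (by lia) (by lia)
      have hge : 8 < staircaseDelta 18 := lt_of_pow_lt_pow_left₀ 2 (Nat.zero_le _) (by lia)
      lia

end StaircaseDelta

/-- For a positive integer `n`, `2·δ(n) ≤ n` iff `n ∉ {1, 8, 9, 12, 15}` and `n` is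
not of the form `p` or `2p` for a prime `p`; moreover `2·δ(n) = n` iff
`n ∈ {16, 18}`. -/
theorem stmt9 (n : ℕ) (hn : 0 < n) :
    (2 * staircaseDelta n ≤ n ↔
      n ∉ ({1, 8, 9, 12, 15} : Set ℕ) ∧ ∀ p : ℕ, Nat.Prime p → n ≠ p ∧ n ≠ 2 * p) ∧
    (2 * staircaseDelta n = n ↔ n = 16 ∨ n = 18) := by
  refine ⟨(two_mul_staircaseDelta_le_iff hn).trans ?_, two_mul_staircaseDelta_eq_iff hn⟩
  simp only [Set.mem_insert_iff, Set.mem_singleton_iff, not_or]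
  constructor
  · rintro ⟨h16, r, s, hr, hs, rfl⟩
    refine ⟨by lia, fun p hp => ⟨?_, mul_ne_mul_prime hp hr hs⟩⟩
    rw [← one_mul p]
    exact mul_ne_mul_prime hp (by lia) (by lia)
  · rintro ⟨⟨h1, h8, h9, h12, h15⟩, hprime⟩
    obtain ⟨r, s, hr, hs, rfl⟩ := exists_three_le_mul_eq (by lia) h8
      (fun hp => (hprime n hp).1 rfl) (fun p hp => (hprime p hp).2)
    exact ⟨sixteen_le_mul hr hs h9 h12 h15, r, s, hr, hs, rfl⟩
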